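/- Let Q be the optimal Q-function for reward r, let f : ℝ → ℝ satisfy: (1) f is concave; (2i) f(x+y) ≥ f(x) + f(y) for all x, y; (2ii) f(γx) ≥ γ·f(x) for all x; (3) f(max_{a∈A} 𝒬(s,a)) ≥ max_{a∈A} f(𝒬(s,a)) for every function 𝒬 : S × A → ℝ and every s, and let Q̃ be the optimal Q-function for reward (s,a) ↦ f(r(s,a)). Define V_f(s) = max_{a∈A} f(Q(s,a)), let Ĉ be the optimal Q-function for reward r̂_C(s,a) = f(Q(s,a)) − f(r(s,a)) − γ·∑_{s'} p(s'|s,a)·V_f(s'), and let π_f be the greedy policy π_f(s) ∈ argmax_{a∈A} f(Q(s,a)). Let Q̃^{π_f} be the value of π_f for reward (s,a) ↦ f(r(s,a)), and let D̂ satisfy D̂(s,a) = r̂_D(s,a) + γ·∑_{s'} p(s'|s,a)·D̂(s', π_f(s')) where r̂_D(s,a) = γ·∑_{s'} p(s'|s,a)·[V_f(s') − f(Q(s', π_f(s'))) + Ĉ(s', π_f(s'))]. Then for all (s,a): Q̃(s,a) − Q̃^{π_f}(s,a) ≤ D̂(s,a). -/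

import Mathlib

/-!
Every inequality here is an instance of one maximum principle (`nonpos_of_le_discounted`): a function
`E` on state-action pairs that is bounded by its own discounted expectation along some policy is
nonpositive. It is used three times.

* `E = Q̃ - f ∘ Q`, along a greedy policy for `Q̃`: the conditions on `f` and Jensen's inequality show
  that `f ∘ Q` dominates its own Bellman backup for the reward `f ∘ r`, so `Q̃ ≤ f ∘ Q`.
* `E = f ∘ Q - Q̃ - Ĉ`, along `π_f`: the definition of `r̂_C` gives `f ∘ Q ≤ Q̃ + Ĉ`.
* `E = Q̃ - Q̃^{π_f} - D̂`, along `π_f`: the two bounds combine to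
  `max Q̃(s', ·) ≤ f (Q (s', π_f s')) ≤ Q̃(s', π_f s') + Ĉ(s', π_f s')`, and since `π_f` is greedy,
  `r̂_D` is exactly the discounted expectation of `Ĉ(s', π_f s')`.
-/

open Finset

/-- Maximum of a real-valued function over a nonempty finite action set. -/
noncomputable def amax {A : Type*} [Fintype A] [Nonempty A] (g : A → ℝ) : ℝ :=
  Finset.univ.sup' Finset.univ_nonempty g

lemma le_amax {A : Type*} [Fintype A] [Nonempty A] (g : A → ℝ) (a : A) : g a ≤ amax g :=
  Finset.le_sup' g (Finset.mem_univ a)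

lemma exists_amax_eq {A : Type*} [Fintype A] [Nonempty A] (g : A → ℝ) : ∃ a, amax g = g a := by
  obtain ⟨a, -, h⟩ := Finset.exists_mem_eq_sup' (Finset.univ_nonempty (α := A)) g
  exact ⟨a, h⟩

/-- Maximum principle: at a maximizer `(s, a)` of `E`, the hypothesis gives `E s a ≤ γ * E s a`. -/
lemma nonpos_of_le_discounted {S A : Type*} [Fintype S] [Fintype A]
    (p : S → A → S → ℝ) (hp_nonneg : ∀ s a s', 0 ≤ p s a s') (hp_sum : ∀ s a, ∑ s', p s a s' = 1)
    (γ : ℝ) (hγ0 : 0 < γ) (hγ1 : γ < 1) (E : S → A → ℝ) (σ : S → A)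
    (hE : ∀ s a, E s a ≤ γ * ∑ s', p s a s' * E s' (σ s')) (s : S) (a : A) : E s a ≤ 0 := by
  have : Nonempty (S × A) := ⟨(s, a)⟩
  obtain ⟨⟨s₀, a₀⟩, hmax⟩ := Finite.exists_max (fun x : S × A => E x.1 x.2)
  have hsum : ∑ s', p s₀ a₀ s' * E s' (σ s') ≤ E s₀ a₀ := by
    calc ∑ s', p s₀ a₀ s' * E s' (σ s') ≤ ∑ s', p s₀ a₀ s' * E s₀ a₀ :=
          Finset.sum_le_sum fun s' _ =>
            mul_le_mul_of_nonneg_left (hmax (s', σ s')) (hp_nonneg _ _ _)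
      _ = E s₀ a₀ := by rw [← Finset.sum_mul, hp_sum, one_mul]
  have h1 := hE s₀ a₀
  have h2 := mul_le_mul_of_nonneg_left hsum hγ0.le
  have h3 : E s a ≤ E s₀ a₀ := hmax (s, a)
  nlinarith

/-- **Regret bound for the zero-shot greedy policy, concave conditions, standard RL (Lemma 4.4).** -/
theorem concave_conditions_regret_standard_rl
    {S A : Type*} [Fintype S] [Fintype A] [Nonempty S] [Nonempty A]
    (p : S → A → S → ℝ)
    (hp_nonneg : ∀ s a s', 0 ≤ p s a s')
    (hp_sum : ∀ s a, ∑ s', p s a s' = 1)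
    (γ : ℝ) (hγ0 : 0 < γ) (hγ1 : γ < 1)
    (r : S → A → ℝ)
    -- Q is the optimal Q-function for reward r
    (Q : S → A → ℝ)
    (hQ : ∀ s a, Q s a = r s a + γ * ∑ s', p s a s' * amax (fun a' => Q s' a'))
    -- the transformation function f and its conditions
    (f : ℝ → ℝ)
    (hf_concave : ConcaveOn ℝ Set.univ f)
    (hf_superadd : ∀ x y, f x + f y ≤ f (x + y))
    (hf_superhom : ∀ x, γ * f x ≤ f (γ * x))
    (hf_max : ∀ (𝒬 : S → A → ℝ) (s : S),
      amax (fun a => f (𝒬 s a)) ≤ f (amax (fun a => 𝒬 s a)))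
    -- Q̃ is the optimal Q-function for the transformed reward f ∘ r
    (Qt : S → A → ℝ)
    (hQt : ∀ s a, Qt s a = f (r s a) + γ * ∑ s', p s a s' * amax (fun a' => Qt s' a'))
    -- V_f, the auxiliary reward r̂_C, and Ĉ the optimal Q-function for r̂_C
    (Vf : S → ℝ)
    (hVf : ∀ s, Vf s = amax (fun a => f (Q s a)))
    (rCh : S → A → ℝ)
    (hrCh : ∀ s a, rCh s a = f (Q s a) - f (r s a) - γ * (∑ s', p s a s' * Vf s'))
    (Ch : S → A → ℝ)
    (hCh : ∀ s a, Ch s a = rCh s a + γ * ∑ s', p s a s' * amax (fun a' => Ch s' a'))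
    -- π_f is the greedy policy w.r.t. f(Q(s,·))
    (πf : S → A)
    (hπf : ∀ s a, f (Q s a) ≤ f (Q s (πf s)))
    -- Q̃^{π_f} is the value of π_f on the transformed task
    (Qpf : S → A → ℝ)
    (hQpf : ∀ s a, Qpf s a = f (r s a) + γ * ∑ s', p s a s' * Qpf s' (πf s'))
    -- the auxiliary reward r̂_D and the value D̂ of π_f in the task with reward r̂_D
    (rDh : S → A → ℝ)
    (hrDh : ∀ s a, rDh s a = γ * ∑ s', p s a s' *
      (Vf s' - f (Q s' (πf s')) + Ch s' (πf s')))
    (Dh : S → A → ℝ)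
    (hDh : ∀ s a, Dh s a = rDh s a + γ * ∑ s', p s a s' * Dh s' (πf s')) :
    ∀ s a, Qt s a - Qpf s a ≤ Dh s a := by
  -- discounted expectations are monotone in the integrand
  have mono : ∀ (s : S) (a : A) (g h : S → ℝ), (∀ s', g s' ≤ h s') →
      γ * ∑ s', p s a s' * g s' ≤ γ * ∑ s', p s a s' * h s' := fun s a g h hgh =>
    mul_le_mul_of_nonneg_left (Finset.sum_le_sum fun s' _ =>
      mul_le_mul_of_nonneg_left (hgh s') (hp_nonneg s a s')) hγ0.le
  have hVfπ : ∀ s, Vf s = f (Q s (πf s)) := fun s => by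
    obtain ⟨a, ha⟩ := exists_amax_eq (fun a => f (Q s a))
    refine le_antisymm ?_ ?_
    · rw [hVf, ha]
      exact hπf s a
    · rw [hVf]
      exact le_amax (fun a => f (Q s a)) (πf s)
  -- `f ∘ Q` dominates its own Bellman backup for the reward `f ∘ r`
  have hsuper : ∀ s a, f (r s a) + γ * ∑ s', p s a s' * Vf s' ≤ f (Q s a) := fun s a => by
    have hjensen := hf_concave.le_map_sum (t := Finset.univ) (w := p s a)
      (p := fun s' => amax (fun a' => Q s' a'))
      (fun s' _ => hp_nonneg s a s') (hp_sum s a) (fun _ _ => Set.mem_univ _)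
    simp only [smul_eq_mul] at hjensen
    have h1 := mono s a Vf (fun s' => f (amax (fun a' => Q s' a')))
      (fun s' => by rw [hVf]; exact hf_max Q s')
    have h2 := mul_le_mul_of_nonneg_left hjensen hγ0.le
    have h3 := hf_superhom (∑ s', p s a s' * amax (fun a' => Q s' a'))
    have h4 := hf_superadd (r s a) (γ * ∑ s', p s a s' * amax (fun a' => Q s' a'))
    rw [hQ s a]
    linarith
  have hupper : ∀ s a, Qt s a ≤ f (Q s a) := fun s a => by
    choose σ hσ using fun s => exists_amax_eq (fun a => Qt s a)
    have key := nonpos_of_le_discounted p hp_nonneg hp_sum γ hγ0 hγ1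
      (fun s a => Qt s a - f (Q s a)) σ (fun s a => by
        have h1 := hsuper s a
        have h2 := mono s a (fun s' => f (Q s' (σ s'))) Vf
          (fun s' => by rw [hVfπ]; exact hπf s' _)
        simp only [mul_sub, Finset.sum_sub_distrib]
        rw [hQt s a]
        simp only [hσ]
        linarith) s a
    linarith
  have hlower : ∀ s a, f (Q s a) ≤ Qt s a + Ch s a := fun s a => by
    have key := nonpos_of_le_discounted p hp_nonneg hp_sum γ hγ0 hγ1
      (fun s a => f (Q s a) - Qt s a - Ch s a) πf (fun s a => by
        have h1 := mono s a (fun s' => Qt s' (πf s')) (fun s' => amax (fun a' => Qt s' a'))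
          (fun s' => le_amax (fun a' => Qt s' a') _)
        have h2 := mono s a (fun s' => Ch s' (πf s')) (fun s' => amax (fun a' => Ch s' a'))
          (fun s' => le_amax (fun a' => Ch s' a') _)
        simp only [mul_sub, Finset.sum_sub_distrib]
        rw [hQt s a, hCh s a, hrCh s a]
        simp only [hVfπ]
        linarith) s a
    linarith
  intro s a
  have key := nonpos_of_le_discounted p hp_nonneg hp_sum γ hγ0 hγ1
    (fun s a => Qt s a - Qpf s a - Dh s a) πf (fun s a => by
      have h1 := mono s a (fun s' => amax (fun a' => Qt s' a'))
        (fun s' => Qt s' (πf s') + Ch s' (πf s')) (fun s' => by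
          obtain ⟨b, hb⟩ := exists_amax_eq (fun a' => Qt s' a')
          rw [hb]
          exact ((hupper s' b).trans (hπf s' b)).trans (hlower s' (πf s')))
      have h2 := hrDh s a
      simp only [hVfπ, sub_self, zero_add] at h2
      simp only [mul_add, Finset.sum_add_distrib] at h1
      simp only [mul_sub, Finset.sum_sub_distrib]
      rw [hQt s a, hQpf s a, hDh s a, h2]
      linarith) s a
  linarith
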